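/- Let G₁ be an r₁-regular graph on n₁ vertices and m₁ edges, and let G₂ be an arbitrary graph on n₂ vertices. Then for each α ∈ [0,1], the characteristic polynomial of A_α(G₁⟨v⟩G₂), where G₁⟨v⟩G₂ is the R-vertex join, satisfies ψ_{A_α(G₁⟨v⟩G₂)}(x) = (x−2α)^{m₁−n₁} · ψ_{A_α(G₂)}(x−αn₁) · ∏_{i=2}^{n₁} ( x² − (2α+αr₁+αn₂+λ_i(A_α(G₁)))x + 2α²n₂ + 3αr₁ − r₁ + (3α−1)λ_i(A_α(G₁)) ) · ( x² − (2α+αr₁+αn₂+r₁)x + 2α²n₂ + 6αr₁ − 2r₁ − n₁(1−α)²(x−2α)·Γ_{A_α(G₂)}(x−αn₁) ), where λ₁(A_α(G₁)) ≥ ⋯ ≥ λ_{n₁}(A_α(G₁)) are the A_α-eigenvalues of G₁. -/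

import Mathlib

/-!
Order the vertices of the join as `V(G₁)`, then the new edge vertices, then `V(G₂)`. In
`xI - A_α(G₁⟨v⟩G₂)` the last two blocks do not interact, so eliminating them (Schur complement)
leaves a matrix on `V(G₁)`. The edge vertices contribute a multiple of `B Bᵀ = D(G₁) + A(G₁)`, where
`B` is the incidence matrix, and `G₂` contributes its coronal times the all-ones matrix. For regular
`G₁` everything is thus a combination of `I`, `A_α(G₁)` and the all-ones matrix, and since the
all-ones vector is an eigenvector of `A_α(G₁)`, Brauer's rank-one perturbation theorem changes only
the eigenvalue `r₁`; by Gershgorin's theorem that is the largest one. The factor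
`(x - 2α) ^ (m₁ - n₁)` arises from the `m₁` edge vertices, less one power of `x - 2α` for each
vertex of `G₁` to clear the denominator in the Schur complement.
-/

open Matrix Polynomial
open scoped Classical

noncomputable section

/-- `A_α(G) = α·D(G) + (1-α)·A(G)`, where `D(G)` is the diagonal degree matrix and
`A(G)` the adjacency matrix. -/
def Aalpha {V : Type*} [Fintype V] (G : SimpleGraph V) (α : ℝ) : Matrix V V ℝ :=
  α • Matrix.diagonal (fun v => (G.degree v : ℝ)) + (1 - α) • G.adjMatrix ℝ

/-- The `M`-coronal `Γ_M(x) = 1ᵀ (xI − M)⁻¹ 1`, i.e. the sum of the entries of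
`(xI − M)⁻¹`. -/
def coronal {n : Type*} [Fintype n] (M : Matrix n n ℝ) (x : ℝ) : ℝ :=
  ∑ i, ∑ j, (x • (1 : Matrix n n ℝ) - M)⁻¹ i j

/-- The `R`-vertex join `G₁⟨v⟩G₂`: take the `R`-graph `R(G₁)` (for each edge of `G₁` a
new vertex joined to both of its endpoints) together with `G₂`, and join every original
vertex of `G₁` with every vertex of `G₂`. -/
def rVertexJoin {V₁ V₂ : Type*} (G₁ : SimpleGraph V₁) (G₂ : SimpleGraph V₂) :
    SimpleGraph (V₁ ⊕ (↥G₁.edgeSet ⊕ V₂)) :=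
  SimpleGraph.fromRel fun a b =>
    match a, b with
    | Sum.inl v, Sum.inl w => G₁.Adj v w
    | Sum.inl v, Sum.inr (Sum.inl e) => v ∈ (e : Sym2 V₁)
    | Sum.inl _, Sum.inr (Sum.inr _) => True
    | Sum.inr (Sum.inr u), Sum.inr (Sum.inr w) => G₂.Adj u w
    | _, _ => False

section Charpoly

variable {n R : Type*} [Fintype n] [DecidableEq n] [CommRing R]

theorem eval_charpoly_eq_det_smul_one_sub (M : Matrix n n R) (x : R) :
    M.charpoly.eval x = (x • (1 : Matrix n n R) - M).det := by
  rw [eval_charpoly, scalar_apply, smul_one_eq_diagonal]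

theorem isRoot_charpoly_of_mulVec_eq_smul [IsDomain R] {M : Matrix n n R} {v : n → R} {s : R}
    (hv : v ≠ 0) (h : M *ᵥ v = s • v) : M.charpoly.IsRoot s := by
  rw [IsRoot, eval_charpoly_eq_det_smul_one_sub]
  exact exists_mulVec_eq_zero_iff.mp
    ⟨v, hv, by rw [sub_mulVec, smul_mulVec, one_mulVec, h, sub_self]⟩

theorem charpoly_smul_eq_scaleRoots (q : R) (M : Matrix n n R) :
    (q • M).charpoly = M.charpoly.scaleRoots q := by
  nontriviality R
  ext i
  rw [coeff_scaleRoots, charpoly_natDegree_eq_dim]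
  obtain hi | hi := le_or_gt i (Fintype.card n)
  · obtain ⟨k, hk, rfl⟩ : ∃ k ≤ Fintype.card n, i = Fintype.card n - k :=
      ⟨Fintype.card n - i, by lia, by lia⟩
    rw [charpoly_coeff_eq_sum_minors _ k hk, charpoly_coeff_eq_sum_minors _ k hk,
      Nat.sub_sub_self hk, mul_assoc, Finset.sum_mul]
    congr 1
    refine Finset.sum_congr rfl fun s hs => ?_
    have hminor : (q • M).submatrix (Subtype.val : s → n) (Subtype.val : s → n) =
        q • M.submatrix Subtype.val Subtype.val := rfl
    rw [hminor, det_smul, Fintype.card_coe, (Finset.mem_powersetCard.mp hs).2, mul_comm]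
  · rw [coeff_eq_zero_of_natDegree_lt (by rwa [charpoly_natDegree_eq_dim]),
      coeff_eq_zero_of_natDegree_lt (by rwa [charpoly_natDegree_eq_dim]), zero_mul]

theorem prod_scaleRoots [NoZeroDivisors R] {ι : Type*} (s : Finset ι) (p : ι → R[X]) (q : R) :
    (∏ i ∈ s, p i).scaleRoots q = ∏ i ∈ s, (p i).scaleRoots q :=
  map_prod
    ({ toFun := fun p => p.scaleRoots q
       map_one' := one_scaleRoots q
       map_mul' := fun p p' => mul_scaleRoots_of_noZeroDivisors p p' q } : R[X] →* R[X]) p s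

theorem charpoly_smul_eq_prod [NoZeroDivisors R] {M : Matrix n n R} {μ : n → R}
    (hM : M.charpoly = ∏ i, (X - C (μ i))) (q : R) :
    (q • M).charpoly = ∏ i, (X - C (q * μ i)) := by
  simp only [charpoly_smul_eq_scaleRoots, hM, prod_scaleRoots, X_sub_C_scaleRoots, mul_comm q]

/- Brauer's rank-one perturbation theorem. With `t = X - s` and `K = X - M` one has `K v = t v`,
so `(K - v wᵀ) t = K (t - v wᵀ)`; then take determinants and cancel powers of the monic `t`. -/
theorem X_sub_C_mul_charpoly_add_vecMulVec {M : Matrix n n R} {v : n → R} {s : R}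
    (h : M *ᵥ v = s • v) (w : n → R) :
    (X - C s) * (M + vecMulVec v w).charpoly = (X - C (s + v ⬝ᵥ w)) * M.charpoly := by
  cases isEmpty_or_nonempty n
  · simp
  set t : R[X] := X - C s
  set W : Matrix n n R[X] := vecMulVec (C ∘ v) (C ∘ w)
  have hadd : (M + vecMulVec v w).charmatrix = M.charmatrix - W := by
    ext1 i j
    simp only [charmatrix_apply, Matrix.add_apply, Matrix.sub_apply, vecMulVec_apply,
      Function.comp_apply, W, map_add, map_mul, sub_sub]
  have heig : M.charmatrix *ᵥ (C ∘ v) = t • (C ∘ v) := by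
    ext1 i
    have hi : ∑ j, M i j * v j = s * v i := congrFun h i
    simp [charmatrix, mulVec, dotProduct, t, ← map_mul, ← map_sum, hi, sub_mul, diagonal_apply]
  have hfactor : (M.charmatrix - W) * (t • 1) = M.charmatrix * (t • 1 - W) := by
    rw [Matrix.sub_mul, Matrix.mul_sub, mul_vecMulVec, heig, smul_vecMulVec, Matrix.mul_smul,
      Matrix.mul_smul, Matrix.mul_one, Matrix.mul_one]
  have hdet := congrArg det hfactor
  rw [det_mul, det_mul, ← hadd, det_smul, det_one, mul_one, ← eval_charpoly_eq_det_smul_one_sub,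
    charpoly_vecMulVec] at hdet
  have ht : t ^ Fintype.card n = t * t ^ (Fintype.card n - 1) :=
    (mul_pow_sub_one Fintype.card_ne_zero t).symm
  have hdot : (C ∘ v) ⬝ᵥ (C ∘ w) = C (v ⬝ᵥ w) := (RingHom.map_dotProduct C v w).symm
  refine ((monic_X_sub_C s).pow (Fintype.card n - 1)).isRegular.left ?_
  simp only [eval_sub, eval_pow, eval_smul, eval_X, smul_eq_mul, hdot] at hdet
  simp only [charpoly, map_add]
  linear_combination hdet + (M.charmatrix.det - (M + vecMulVec v w).charmatrix.det) * ht

theorem charpoly_add_vecMulVec_eq_prod {M : Matrix n n R} {μ : n → R}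
    (hM : M.charpoly = ∏ i, (X - C (μ i))) {v : n → R} {i₀ : n} (hv : M *ᵥ v = μ i₀ • v)
    (w : n → R) :
    (M + vecMulVec v w).charpoly =
      (X - C (μ i₀ + v ⬝ᵥ w)) * ∏ i ∈ Finset.univ.erase i₀, (X - C (μ i)) := by
  refine (monic_X_sub_C (μ i₀)).isRegular.left ?_
  beta_reduce
  rw [X_sub_C_mul_charpoly_add_vecMulVec hv, hM, ← Finset.mul_prod_erase _ _ (Finset.mem_univ i₀),
    mul_left_comm]

theorem det_fromBlocks_fromCols_fromRows {l m : Type*} [Fintype l] [Fintype m] [DecidableEq l]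
    [DecidableEq m] (A : Matrix l l R) (B₁ : Matrix l m R) (B₂ : Matrix l n R)
    (C₁ : Matrix m l R) (C₂ : Matrix n l R) {D₁ : Matrix m m R} {D₂ : Matrix n n R}
    (hD₁ : IsUnit D₁) (hD₂ : IsUnit D₂) :
    (fromBlocks A (fromCols B₁ B₂) (fromRows C₁ C₂) (fromBlocks D₁ 0 0 D₂)).det =
      D₁.det * D₂.det * (A - B₁ * D₁⁻¹ * C₁ - B₂ * D₂⁻¹ * C₂).det := by
  have : Invertible D₁ := hD₁.invertible
  have : Invertible D₂ := hD₂.invertible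
  let : Invertible (fromBlocks D₁ 0 0 D₂) := fromBlocksZero₂₁Invertible D₁ 0 D₂
  rw [det_fromBlocks₂₂, det_fromBlocks_zero₂₁, invOf_fromBlocks_zero₂₁_eq, fromCols_mul_fromBlocks,
    fromCols_mul_fromRows, sub_sub]
  simp

theorem le_of_isRoot_charpoly_of_sum_row_le {M : Matrix n n ℝ} (hM : ∀ i j, i ≠ j → 0 ≤ M i j)
    {s : ℝ} (hs : ∀ i, ∑ j, M i j ≤ s) {t : ℝ} (ht : M.charpoly.IsRoot t) : t ≤ s := by
  rw [← charpoly_toLin', ← Module.End.hasEigenvalue_iff_isRoot_charpoly] at ht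
  obtain ⟨k, hk⟩ := eigenvalue_mem_ball ht
  have hnorm : ∑ j ∈ Finset.univ.erase k, ‖M k j‖ = ∑ j ∈ Finset.univ.erase k, M k j :=
    Finset.sum_congr rfl fun j hj =>
      Real.norm_of_nonneg (hM k j (Finset.ne_of_mem_erase hj).symm)
  rw [Metric.mem_closedBall, Real.dist_eq, hnorm] at hk
  calc t ≤ M k k + ∑ j ∈ Finset.univ.erase k, M k j := by linarith [le_abs_self (t - M k k)]
    _ = ∑ j, M k j := Finset.add_sum_erase _ _ (Finset.mem_univ k)
    _ ≤ s := hs k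

end Charpoly

section Aalpha

variable {V : Type*} [Fintype V] (G : SimpleGraph V) (α : ℝ)

theorem Aalpha_eq_degMatrix_add_adjMatrix [DecidableEq V] :
    Aalpha G α = α • G.degMatrix ℝ + (1 - α) • G.adjMatrix ℝ := by
  unfold Aalpha SimpleGraph.degMatrix
  congr!

theorem adjMatrix_mulVec_one {R : Type*} [NonAssocSemiring R] :
    G.adjMatrix R *ᵥ 1 = fun v => (G.degree v : R) := by
  ext v
  simp

theorem Aalpha_mulVec_one : Aalpha G α *ᵥ 1 = fun v => (G.degree v : ℝ) := by
  ext v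
  simp [Aalpha, add_mulVec, smul_mulVec, mulVec_diagonal]
  ring

variable {G α}

theorem Aalpha_mulVec_one_of_regular {r : ℕ} (hreg : G.IsRegularOfDegree r) (α : ℝ) :
    Aalpha G α *ᵥ 1 = (r : ℝ) • 1 := by
  rw [Aalpha_mulVec_one]
  ext v
  simp [hreg v]

theorem degMatrix_eq_smul_one_of_regular [DecidableEq V] {r : ℕ} (hreg : G.IsRegularOfDegree r)
    (R : Type*) [Semiring R] : G.degMatrix R = (r : R) • 1 := by
  simp only [SimpleGraph.degMatrix, hreg.degree_eq, smul_one_eq_diagonal]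

theorem isGreatest_isRoot_charpoly_Aalpha [DecidableEq V] [Nonempty V] {r : ℕ}
    (hreg : G.IsRegularOfDegree r) (hα : α ≤ 1) :
    IsGreatest {t | (Aalpha G α).charpoly.IsRoot t} r := by
  have hone := Aalpha_mulVec_one_of_regular hreg α
  refine ⟨isRoot_charpoly_of_mulVec_eq_smul one_ne_zero hone, fun t ht =>
    le_of_isRoot_charpoly_of_sum_row_le (fun v w hvw => ?_) (fun v => ?_) ht⟩
  · have : 0 ≤ (1 - α) * G.adjMatrix ℝ v w :=
      mul_nonneg (sub_nonneg.2 hα) (by rw [SimpleGraph.adjMatrix_apply]; positivity)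
    simpa [Aalpha, hvw] using this
  · exact (by simpa [mulVec, dotProduct] using congrFun hone v : ∑ w, Aalpha G α v w = r).le

end Aalpha

theorem vecMulVec_one_mul_inv_mul_vecMulVec_one {l m n : Type*} [Fintype n] [DecidableEq n]
    (M : Matrix n n ℝ) (x : ℝ) :
    (vecMulVec 1 1 : Matrix l n ℝ) * (x • 1 - M)⁻¹ * (vecMulVec 1 1 : Matrix n m ℝ) =
      coronal M x • vecMulVec 1 1 := by
  have hcoronal : coronal M x = (1 ᵥ* (x • 1 - M)⁻¹) ⬝ᵥ 1 := by
    rw [← dotProduct_mulVec, one_dotProduct]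
    simp only [coronal, mulVec, dotProduct, Pi.one_apply, mul_one]
    congr!
  rw [vecMulVec_mul, vecMulVec_mul_vecMulVec, hcoronal, vecMulVec_smul]

section Incidence

variable {V : Type*} (G : SimpleGraph V) (R : Type*)

/-- The vertex-edge incidence matrix of `G` with columns indexed by the edges of `G` only, whereas
the columns of `SimpleGraph.incMatrix` range over all of `Sym2 V`. -/
def edgeIncMatrix [Zero R] [One R] : Matrix V G.edgeSet R :=
  (G.incMatrix R).submatrix id (↑)

theorem edgeIncMatrix_apply [MulZeroOneClass R] (v : V) (e : G.edgeSet) :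
    edgeIncMatrix G R v e = if v ∈ (e : Sym2 V) then 1 else 0 := by
  simp [edgeIncMatrix, SimpleGraph.incMatrix_apply', SimpleGraph.incidenceSet, e.2]

variable [Fintype V] [NonAssocSemiring R]

theorem edgeIncMatrix_mulVec_one : edgeIncMatrix G R *ᵥ 1 = fun v => (G.degree v : R) := by
  ext v
  rw [← G.sum_incMatrix_apply (R := R)]
  simp only [mulVec, dotProduct, Pi.one_apply, mul_one]
  refine Fintype.sum_of_injective _ Subtype.val_injective _ _ (fun e he => ?_) fun _ => rfl
  exact G.incMatrix_of_notMem_incidenceSet (R := R) fun h => he (by simpa using h.1)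

theorem edgeIncMatrix_transpose_mulVec_one : (edgeIncMatrix G R)ᵀ *ᵥ 1 = fun _ => 2 := by
  ext e
  simp only [mulVec, dotProduct, Pi.one_apply, mul_one]
  exact G.sum_incMatrix_apply_of_mem_edgeSet (R := R) e.2

theorem edgeIncMatrix_mul_transpose (R : Type*) [Semiring R] [DecidableEq V] :
    edgeIncMatrix G R * (edgeIncMatrix G R)ᵀ = G.degMatrix R + G.adjMatrix R := by
  have hinc : edgeIncMatrix G R * (edgeIncMatrix G R)ᵀ = G.incMatrix R * (G.incMatrix R)ᵀ := by
    ext v w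
    simp only [mul_apply, transpose_apply]
    refine Fintype.sum_of_injective _ Subtype.val_injective _ _ (fun e he => ?_) fun e => ?_
    · rw [G.incMatrix_of_notMem_incidenceSet (R := R) fun h => he (by simpa using h.1), zero_mul]
    · simp only [edgeIncMatrix, submatrix_apply, id]
      congr!
  rw [hinc, SimpleGraph.incMatrix_mul_transpose]
  ext v w
  by_cases hvw : v = w <;> simp [SimpleGraph.degMatrix, hvw]

end Incidence

section rVertexJoin

variable {V₁ V₂ : Type*} (G₁ : SimpleGraph V₁) (G₂ : SimpleGraph V₂)

theorem adjMatrix_rVertexJoin (R : Type*) [NonAssocSemiring R] :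
    (rVertexJoin G₁ G₂).adjMatrix R =
      fromBlocks (G₁.adjMatrix R) (fromCols (edgeIncMatrix G₁ R) (vecMulVec 1 1))
        (fromRows (edgeIncMatrix G₁ R)ᵀ (vecMulVec 1 1)) (fromBlocks 0 0 0 (G₂.adjMatrix R)) := by
  have hadj₁ (v w : V₁) : ¬v = w ∧ G₁.Adj v w ↔ G₁.Adj v w := and_iff_right_of_imp G₁.ne_of_adj
  have hadj₂ (u t : V₂) : ¬u = t ∧ G₂.Adj u t ↔ G₂.Adj u t := and_iff_right_of_imp G₂.ne_of_adj
  ext (v | e | u) (w | f | t) <;> rw [SimpleGraph.adjMatrix_apply] <;>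
    simp [rVertexJoin, edgeIncMatrix_apply, SimpleGraph.adj_comm, hadj₁, hadj₂]

variable [Fintype V₁] [Fintype V₂]

theorem degree_rVertexJoin (R : Type*) [Semiring R] :
    (fun a => ((rVertexJoin G₁ G₂).degree a : R)) =
      Sum.elim (fun v => 2 * (G₁.degree v : R) + Fintype.card V₂)
        (Sum.elim (fun _ => 2) fun u => G₂.degree u + Fintype.card V₁) := by
  rw [← adjMatrix_mulVec_one, adjMatrix_rVertexJoin, fromBlocks_mulVec, fromCols_mulVec,
    fromRows_mulVec, fromBlocks_mulVec]
  simp only [Pi.one_comp, adjMatrix_mulVec_one, edgeIncMatrix_mulVec_one, vecMulVec_mulVec,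
    edgeIncMatrix_transpose_mulVec_one, one_dotProduct_one, zero_mulVec, zero_add, add_zero]
  ext (v | e | u)
  · simp [two_mul, add_assoc]
  · simp
  · simp [add_comm]

theorem Aalpha_rVertexJoin (α : ℝ) [DecidableEq V₁] [DecidableEq V₂] :
    Aalpha (rVertexJoin G₁ G₂) α =
      fromBlocks (Aalpha G₁ α + α • G₁.degMatrix ℝ + (α * Fintype.card V₂) • 1)
        (fromCols ((1 - α) • edgeIncMatrix G₁ ℝ) ((1 - α) • vecMulVec 1 1))
        (fromRows ((1 - α) • (edgeIncMatrix G₁ ℝ)ᵀ) ((1 - α) • vecMulVec 1 1))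
        (fromBlocks ((2 * α) • 1) 0 0 (Aalpha G₂ α + (α * Fintype.card V₁) • 1)) := by
  rw [Aalpha, degree_rVertexJoin G₁ G₂ ℝ, adjMatrix_rVertexJoin]
  ext (v | e | u) (w | f | t)
  case inl.inl =>
    obtain rfl | hvw := eq_or_ne v w
    · simp [Aalpha, SimpleGraph.degMatrix]
      ring
    · simp [Aalpha, SimpleGraph.degMatrix, hvw]
  case inr.inl.inr.inl =>
    obtain rfl | hef := eq_or_ne e f
    · simp [mul_comm]
    · simp [hef]
  case inr.inr.inr.inr =>
    obtain rfl | hut := eq_or_ne u t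
    · simp [Aalpha, mul_add]
    · simp [Aalpha, hut]
  all_goals simp

theorem smul_one_sub_Aalpha_rVertexJoin [DecidableEq V₁] [DecidableEq V₂] (α x : ℝ) :
    x • 1 - Aalpha (rVertexJoin G₁ G₂) α =
      fromBlocks ((x - α * Fintype.card V₂) • 1 - Aalpha G₁ α - α • G₁.degMatrix ℝ)
        (fromCols ((α - 1) • edgeIncMatrix G₁ ℝ) ((α - 1) • vecMulVec 1 1))
        (fromRows ((α - 1) • (edgeIncMatrix G₁ ℝ)ᵀ) ((α - 1) • vecMulVec 1 1))
        (fromBlocks ((x - 2 * α) • 1) 0 0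
          ((x - α * Fintype.card V₁) • 1 - Aalpha G₂ α)) := by
  rw [Aalpha_rVertexJoin, ← fromBlocks_one, ← fromBlocks_one]
  ext (v | e | u) (w | f | t) <;> simp [-fromBlocks_one] <;> ring

theorem eval_charpoly_Aalpha_rVertexJoin [DecidableEq V₁] [DecidableEq V₂] {α x : ℝ}
    (hx₁ : IsUnit ((x - α * Fintype.card V₁) • 1 - Aalpha G₂ α)) (hx₂ : x ≠ 2 * α) :
    (Aalpha (rVertexJoin G₁ G₂) α).charpoly.eval x =
      (x - 2 * α) ^ Fintype.card G₁.edgeSet *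
        (Aalpha G₂ α).charpoly.eval (x - α * Fintype.card V₁) *
        ((x - α * Fintype.card V₂) • 1 - Aalpha G₁ α - α • G₁.degMatrix ℝ -
          ((1 - α) ^ 2 / (x - 2 * α)) • (G₁.degMatrix ℝ + G₁.adjMatrix ℝ) -
          ((1 - α) ^ 2 * coronal (Aalpha G₂ α) (x - α * Fintype.card V₁)) •
            vecMulVec 1 1).det := by
  have hd : x - 2 * α ≠ 0 := sub_ne_zero.2 hx₂
  have hinv : ((x - 2 * α) • (1 : Matrix G₁.edgeSet G₁.edgeSet ℝ)) * ((x - 2 * α)⁻¹ • 1) = 1 := by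
    rw [smul_mul_smul_comm, mul_inv_cancel₀ hd, Matrix.one_mul, one_smul]
  have hedge : ((α - 1) • edgeIncMatrix G₁ ℝ) *
      ((x - 2 * α) • (1 : Matrix G₁.edgeSet G₁.edgeSet ℝ))⁻¹ *
        ((α - 1) • (edgeIncMatrix G₁ ℝ)ᵀ) =
      ((1 - α) ^ 2 / (x - 2 * α)) • (G₁.degMatrix ℝ + G₁.adjMatrix ℝ) := by
    rw [inv_eq_right_inv hinv, Matrix.smul_mul, Matrix.mul_smul, Matrix.smul_mul,
      Matrix.mul_smul, Matrix.smul_mul, Matrix.mul_one, smul_smul, smul_smul,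
      edgeIncMatrix_mul_transpose]
    congr 1
    ring
  have hjoin : ((α - 1) • vecMulVec 1 1 : Matrix V₁ V₂ ℝ) *
      ((x - α * Fintype.card V₁) • 1 - Aalpha G₂ α)⁻¹ *
        ((α - 1) • vecMulVec 1 1 : Matrix V₂ V₁ ℝ) =
      ((1 - α) ^ 2 * coronal (Aalpha G₂ α) (x - α * Fintype.card V₁)) • vecMulVec 1 1 := by
    rw [Matrix.smul_mul, Matrix.smul_mul, Matrix.mul_smul, vecMulVec_one_mul_inv_mul_vecMulVec_one,
      smul_smul, smul_smul]
    congr 1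
    ring
  rw [eval_charpoly_eq_det_smul_one_sub, eval_charpoly_eq_det_smul_one_sub,
    smul_one_sub_Aalpha_rVertexJoin,
    det_fromBlocks_fromCols_fromRows _ _ _ _ _ (.of_mul_eq_one _ hinv) hx₁,
    hedge, hjoin, det_smul, det_one, mul_one]

theorem eval_charpoly_Aalpha_rVertexJoin_of_regular [DecidableEq V₁] [DecidableEq V₂] {α x : ℝ}
    {r : ℕ} (hreg : G₁.IsRegularOfDegree r)
    (hx₁ : IsUnit ((x - α * Fintype.card V₁) • 1 - Aalpha G₂ α)) (hx₂ : x ≠ 2 * α) :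
    (Aalpha (rVertexJoin G₁ G₂) α).charpoly.eval x =
      (x - 2 * α) ^ ((Fintype.card G₁.edgeSet : ℤ) - Fintype.card V₁) *
        (Aalpha G₂ α).charpoly.eval (x - α * Fintype.card V₁) *
        ((x - 3 * α + 1) • Aalpha G₁ α + vecMulVec
            (((x - 2 * α) * (1 - α) ^ 2 *
              coronal (Aalpha G₂ α) (x - α * Fintype.card V₁)) • 1) 1).charpoly.eval
          ((x - 2 * α) * (x - α * Fintype.card V₂ - α * r) - (1 - α) * (1 - 2 * α) * r) := by
  have hd : x - 2 * α ≠ 0 := sub_ne_zero.2 hx₂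
  rw [eval_charpoly_Aalpha_rVertexJoin G₁ G₂ hx₁ hx₂, eval_charpoly_eq_det_smul_one_sub (_ + _),
    zpow_sub₀ hd, zpow_natCast, zpow_natCast, div_mul_eq_mul_div, div_mul_eq_mul_div,
    eq_div_iff (pow_ne_zero _ hd), mul_assoc _ (det _), mul_comm (det _), ← det_smul]
  congr 2
  rw [Aalpha_eq_degMatrix_add_adjMatrix G₁, degMatrix_eq_smul_one_of_regular hreg, smul_vecMulVec]
  match_scalars <;> field_simp <;> ring

theorem Aalpha_charpoly_rVertexJoin_general [DecidableEq V₁] [DecidableEq V₂]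
    {r : ℕ} (hreg : G₁.IsRegularOfDegree r) (α : ℝ) {μ : V₁ → ℝ}
    (hμ : (Aalpha G₁ α).charpoly = ∏ i, (X - C (μ i))) {i₀ : V₁} (hi₀ : μ i₀ = r) {x : ℝ}
    (hx₁ : ((x - α * Fintype.card V₁) • (1 : Matrix V₂ V₂ ℝ) - Aalpha G₂ α).det ≠ 0)
    (hx₂ : x ≠ 2 * α) :
    (Aalpha (rVertexJoin G₁ G₂) α).charpoly.eval x =
      (x - 2 * α) ^ ((Fintype.card G₁.edgeSet : ℤ) - Fintype.card V₁) *
        (Aalpha G₂ α).charpoly.eval (x - α * Fintype.card V₁) *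
        (∏ i ∈ Finset.univ.erase i₀,
          (x ^ 2 - (2 * α + α * r + α * Fintype.card V₂ + μ i) * x
            + 2 * α ^ 2 * Fintype.card V₂ + 3 * α * r - r + (3 * α - 1) * μ i)) *
        (x ^ 2 - (2 * α + α * r + α * Fintype.card V₂ + r) * x
          + 2 * α ^ 2 * Fintype.card V₂ + 6 * α * r - 2 * r
          - Fintype.card V₁ * (1 - α) ^ 2 * (x - 2 * α) *
            coronal (Aalpha G₂ α) (x - α * Fintype.card V₁)) := by
  have hchar := charpoly_add_vecMulVec_eq_prod (charpoly_smul_eq_prod hμ (x - 3 * α + 1))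
    (i₀ := i₀) (v := ((x - 2 * α) * (1 - α) ^ 2 *
      coronal (Aalpha G₂ α) (x - α * Fintype.card V₁)) • 1)
    (by rw [smul_mulVec, mulVec_smul, Aalpha_mulVec_one_of_regular hreg, hi₀]; module) 1
  rw [eval_charpoly_Aalpha_rVertexJoin_of_regular G₁ G₂ hreg
      ((isUnit_iff_isUnit_det _).2 hx₁.isUnit) hx₂, hchar, mul_assoc (_ * _),
    mul_comm (∏ i ∈ _, _) (_ - _), eval_mul, eval_prod]
  congr 2
  · simp [hi₀]
    ring
  · refine Finset.prod_congr rfl fun i _ => ?_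
    simp
    ring

end rVertexJoin

/-- Theorem 5.1: the `A_α`-characteristic polynomial of the `R`-vertex join `G₁⟨v⟩G₂`
of an `r₁`-regular graph `G₁` (on `n₁` vertices and `m₁` edges) and an arbitrary graph
`G₂` (on `n₂` vertices). -/
theorem Aalpha_charpoly_rVertexJoin
    {n₁ m₁ n₂ r₁ : ℕ} (G₁ : SimpleGraph (Fin n₁)) (G₂ : SimpleGraph (Fin n₂))
    (hconn : G₁.Connected) (hreg : G₁.IsRegularOfDegree r₁)
    (hm : Fintype.card G₁.edgeSet = m₁)
    (α : ℝ) (hα : α ∈ Set.Icc (0 : ℝ) 1)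
    (μ : Fin n₁ → ℝ) (hμ : Antitone μ)
    (hμch : (Aalpha G₁ α).charpoly = ∏ i, (X - C (μ i)))
    (x : ℝ)
    (hx₁ : ((x - α * n₁) • (1 : Matrix (Fin n₂) (Fin n₂) ℝ) - Aalpha G₂ α).det ≠ 0)
    (hx₂ : x ≠ 2 * α) :
    ((Aalpha (rVertexJoin G₁ G₂) α).charpoly).eval x =
      (x - 2 * α) ^ ((m₁ : ℤ) - (n₁ : ℤ)) *
        ((Aalpha G₂ α).charpoly).eval (x - α * n₁) *
        (∏ i ∈ Finset.univ.filter (fun i : Fin n₁ => i.val ≠ 0),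
          (x ^ 2 - (2 * α + α * r₁ + α * n₂ + μ i) * x
            + 2 * α ^ 2 * n₂ + 3 * α * r₁ - r₁ + (3 * α - 1) * μ i)) *
        (x ^ 2 - (2 * α + α * r₁ + α * n₂ + r₁) * x
          + 2 * α ^ 2 * n₂ + 6 * α * r₁ - 2 * r₁
          - n₁ * (1 - α) ^ 2 * (x - 2 * α) * coronal (Aalpha G₂ α) (x - α * n₁)) := by
  let i₀ : Fin n₁ := ⟨0, Fin.pos_iff_nonempty.2 hconn.nonempty⟩
  have hfilter : Finset.univ.filter (fun i : Fin n₁ => i.val ≠ 0) = Finset.univ.erase i₀ := by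
    ext i
    simp [i₀, Fin.ext_iff]
  have hroots : {t | (Aalpha G₁ α).charpoly.IsRoot t} = Set.range μ := by
    ext t
    simp [hμch, IsRoot, eval_prod, Finset.prod_eq_zero_iff, sub_eq_zero, eq_comm (a := t)]
  have hmax : IsGreatest (Set.range μ) (μ i₀) :=
    ⟨Set.mem_range_self i₀, Set.forall_mem_range.2 fun i => hμ (Nat.zero_le i)⟩
  have := hconn.nonempty
  have hμ₀ : μ i₀ = r₁ :=
    hmax.unique (hroots ▸ isGreatest_isRoot_charpoly_Aalpha hreg hα.2)
  simpa only [Fintype.card_fin, hm, hfilter] using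
    Aalpha_charpoly_rVertexJoin_general G₁ G₂ hreg α hμch hμ₀ (by simpa using hx₁) hx₂
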